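/- arXiv:1907.07432 — 2 statements merged into one kernel-verified Lean document; each statement's English description precedes it below -/
import Mathlib

section
/- Let p, q ∈ [0,1] and let ρ be any 4×4 complex matrix. Conditioning the quantum-switch output on the control-qubit outcome |−⟩ gives (I₄ ⊗ ⟨−|) · S(ρ) · (I₄ ⊗ |−⟩) = pq · (I₂⊗(X·Z)) ρ (I₂⊗(X·Z))†, where S(ρ) = Σ_{i,j∈{1,2}} W_{ij} (ρ ⊗ |+⟩⟨+|) W_{ij}†; moreover the corrective unitary operation recovers ρ exactly: (I₂⊗(X·Z))† [ (I₂⊗(X·Z)) ρ (I₂⊗(X·Z))† ] (I₂⊗(X·Z)) = ρ. Hence, with heralding probability pq, the entanglement distribution via quantum switch is noiseless. -/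
open Matrix Kronecker Complex

noncomputable section

def PX : Matrix (Fin 2) (Fin 2) ℂ := !![0, 1; 1, 0]
def PZ : Matrix (Fin 2) (Fin 2) ℂ := !![1, 0; 0, -1]
def I2 : Matrix (Fin 2) (Fin 2) ℂ := 1

def ket0 : Fin 2 → ℂ := ![1, 0]
def ket1 : Fin 2 → ℂ := ![0, 1]
def ketPlus : Fin 2 → ℂ := ((Real.sqrt 2 : ℂ))⁻¹ • (ket0 + ket1)
def ketMinus : Fin 2 → ℂ := ((Real.sqrt 2 : ℂ))⁻¹ • (ket0 - ket1)

def proj (v : Fin 2 → ℂ) : Matrix (Fin 2) (Fin 2) ℂ := vecMulVec v (star v)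

/-- Kronecker product, flattened to `Fin (m*n)` indices (row-major). -/
def kron {m n : ℕ} (A : Matrix (Fin m) (Fin m) ℂ) (B : Matrix (Fin n) (Fin n) ℂ) :
    Matrix (Fin (m * n)) (Fin (m * n)) ℂ :=
  Matrix.reindex finProdFinEquiv finProdFinEquiv (A ⊗ₖ B)

/-- Bit-flip channel Kraus operators: D₁ = √(1-p)·I₂, D₂ = √p·X. -/
def Dk (p : ℝ) : Fin 2 → Matrix (Fin 2) (Fin 2) ℂ :=
  ![(Real.sqrt (1 - p) : ℂ) • I2, (Real.sqrt p : ℂ) • PX]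

/-- Phase-flip channel Kraus operators: E₁ = √(1-q)·I₂, E₂ = √q·Z. -/
def Ek (q : ℝ) : Fin 2 → Matrix (Fin 2) (Fin 2) ℂ :=
  ![(Real.sqrt (1 - q) : ℂ) • I2, (Real.sqrt q : ℂ) • PZ]

/-- Quantum-switch Kraus operators W_{ij} = I₂ ⊗ (DᵢEⱼ ⊗ |0⟩⟨0| + EⱼDᵢ ⊗ |1⟩⟨1|). -/
def W (p q : ℝ) (i j : Fin 2) : Matrix (Fin 8) (Fin 8) ℂ :=
  kron I2 (kron (Dk p i * Ek q j) (proj ket0) + kron (Ek q j * Dk p i) (proj ket1))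

/-- Quantum-switch output S(ρ) = Σᵢⱼ W_{ij} (ρ ⊗ |+⟩⟨+|) W_{ij}†. -/
def Sout (p q : ℝ) (ρ : Matrix (Fin 4) (Fin 4) ℂ) : Matrix (Fin 8) (Fin 8) ℂ :=
  ∑ i : Fin 2, ∑ j : Fin 2, W p q i j * kron ρ (proj ketPlus) * (W p q i j)ᴴ

/-- Contraction of the control-qubit factor of an 8×8 matrix with a vector v:
(I₄ ⊗ ⟨v|) M (I₄ ⊗ |v⟩). -/
def contractCtrl (M : Matrix (Fin 8) (Fin 8) ℂ) (v : Fin 2 → ℂ) :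
    Matrix (Fin 4) (Fin 4) ℂ :=
  Matrix.of fun a b => ∑ i : Fin 2, ∑ j : Fin 2,
    star (v i) * M (finProdFinEquiv (a, i)) (finProdFinEquiv (b, j)) * v j

/-!
Writing `J v = I ⊗ |v⟩`, the input is `ρ ⊗ |+⟩⟨+| = J₊ ρ J₊†` and the heralding is `M ↦ J₋† M J₋`,
so each Kraus operator `W` of the switch acts on the heralded branch as `J₋† W J₊`. Since
`⟨-|0⟩⟨0|+⟩ = 1/2` and `⟨-|1⟩⟨1|+⟩ = -1/2`, this is half of `I ⊗ (DᵢEⱼ - EⱼDᵢ)`. The only Kraus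
operators that do not commute are the multiples of `X` and `Z`, and these anticommute, so the
branch consists of the single unitary error `I ⊗ XZ`.
-/

section Kron

variable {m n : ℕ}

theorem kron_add (A : Matrix (Fin m) (Fin m) ℂ) (B C : Matrix (Fin n) (Fin n) ℂ) :
    kron A (B + C) = kron A B + kron A C := by
  simp only [kron, kronecker_add, reindex_apply, submatrix_add, Pi.add_apply]

theorem kron_smul (c : ℂ) (A : Matrix (Fin m) (Fin m) ℂ) (B : Matrix (Fin n) (Fin n) ℂ) :
    kron A (c • B) = c • kron A B := by
  simp only [kron, kronecker_smul, reindex_apply, submatrix_smul, Pi.smul_apply]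

theorem kron_zero (A : Matrix (Fin m) (Fin m) ℂ) : kron A (0 : Matrix (Fin n) (Fin n) ℂ) = 0 := by
  simpa only [zero_smul] using kron_smul 0 A (0 : Matrix (Fin n) (Fin n) ℂ)

theorem kron_sub (A : Matrix (Fin m) (Fin m) ℂ) (B C : Matrix (Fin n) (Fin n) ℂ) :
    kron A (B - C) = kron A B - kron A C := by
  rw [eq_sub_iff_add_eq, ← kron_add, sub_add_cancel]

theorem kron_assoc {k : ℕ} (A : Matrix (Fin k) (Fin k) ℂ) (B : Matrix (Fin m) (Fin m) ℂ)
    (C : Matrix (Fin n) (Fin n) ℂ) :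
    kron A (kron B C) = (kron (kron A B) C).reindex
      (finCongr (mul_assoc k m n)) (finCongr (mul_assoc k m n)) := by
  have assoc_index : ∀ (a : Fin k) (b : Fin m) (c : Fin n),
      (finCongr (mul_assoc k m n)).symm (finProdFinEquiv (a, finProdFinEquiv (b, c))) =
        finProdFinEquiv (finProdFinEquiv (a, b), c) := by
    intro a b c
    ext
    simp only [finCongr_symm, finCongr_apply, Fin.val_cast, finProdFinEquiv_apply_val]
    ring
  ext x y
  obtain ⟨⟨a, bc⟩, rfl⟩ := finProdFinEquiv.surjective x
  obtain ⟨⟨b, c⟩, rfl⟩ := finProdFinEquiv.surjective bc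
  obtain ⟨⟨a', bc'⟩, rfl⟩ := finProdFinEquiv.surjective y
  obtain ⟨⟨b', c'⟩, rfl⟩ := finProdFinEquiv.surjective bc'
  simp only [reindex_apply, submatrix_apply, assoc_index, kron, Equiv.symm_apply_apply,
    kroneckerMap_apply, mul_assoc]

theorem kron_mem_unitaryGroup {A : Matrix (Fin m) (Fin m) ℂ} {B : Matrix (Fin n) (Fin n) ℂ}
    (hA : A ∈ unitaryGroup (Fin m) ℂ) (hB : B ∈ unitaryGroup (Fin n) ℂ) :
    kron A B ∈ unitaryGroup (Fin (m * n)) ℂ := by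
  have h := mem_unitaryGroup_iff.mp (kronecker_mem_unitary hA hB)
  rw [mem_unitaryGroup_iff, kron, star_eq_conjTranspose, conjTranspose_reindex, reindex_apply,
    reindex_apply, submatrix_mul_equiv, ← star_eq_conjTranspose, h, submatrix_one_equiv]

end Kron

section TensorKet

variable {m n : ℕ}

/-- The operator `I ⊗ |v⟩` that adjoins a control system in state `v`, with the row-major index
convention of `kron`. -/
def tensorKet (n : ℕ) (v : Fin m → ℂ) : Matrix (Fin (n * m)) (Fin n) ℂ :=
  ((1 : Matrix (Fin n) (Fin n) ℂ) ⊗ₖ replicateCol Unit v).reindex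
    finProdFinEquiv (Equiv.prodPUnit (Fin n))

theorem kron_vecMulVec (ρ : Matrix (Fin n) (Fin n) ℂ) (v w : Fin m → ℂ) :
    kron ρ (vecMulVec v (star w)) = tensorKet n v * ρ * (tensorKet n w)ᴴ := by
  have hρ : ρ = (ρ ⊗ₖ (1 : Matrix Unit Unit ℂ)).reindex
      (Equiv.prodPUnit (Fin n)) (Equiv.prodPUnit (Fin n)) := by
    ext a b
    simp
  conv_rhs => rw [hρ]
  simp only [kron, tensorKet, reindex_apply, conjTranspose_submatrix, conjTranspose_kronecker,
    submatrix_mul_equiv, ← mul_kronecker_mul, conjTranspose_one, Matrix.one_mul, Matrix.mul_one,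
    conjTranspose_replicateCol, vecMulVec_eq Unit]

theorem tensorKet_conjTranspose_mul_kron_mul (A : Matrix (Fin n) (Fin n) ℂ)
    (B : Matrix (Fin m) (Fin m) ℂ) (v w : Fin m → ℂ) :
    (tensorKet n w)ᴴ * kron A B * tensorKet n v = (star w ⬝ᵥ B *ᵥ v) • A := by
  simp only [kron, tensorKet, reindex_apply, conjTranspose_submatrix, conjTranspose_kronecker,
    submatrix_mul_equiv, ← mul_kronecker_mul, conjTranspose_one, Matrix.one_mul, Matrix.mul_one,
    conjTranspose_replicateCol]
  ext a b
  rw [Matrix.smul_apply, smul_eq_mul, mul_comm, dotProduct_mulVec,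
    ← replicateRow_mul_replicateCol_apply (ι := Unit) _ _ () (), replicateRow_vecMul]
  rfl

theorem tensorKet_conjTranspose_mul_mul_apply (M : Matrix (Fin (n * m)) (Fin (n * m)) ℂ)
    (v w : Fin m → ℂ) (a b : Fin n) :
    ((tensorKet n w)ᴴ * M * tensorKet n v) a b =
      ∑ i, ∑ j, star (w i) * M (finProdFinEquiv (a, i)) (finProdFinEquiv (b, j)) * v j := by
  rw [Matrix.mul_assoc]
  simp only [mul_apply, ← finProdFinEquiv.sum_comp, Fintype.sum_prod_type]
  simp [tensorKet, one_apply, Finset.mul_sum, mul_assoc, apply_ite]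

theorem contractCtrl_eq_conj (M : Matrix (Fin 8) (Fin 8) ℂ) (v : Fin 2 → ℂ) :
    contractCtrl M v = (tensorKet 4 v)ᴴ * M * tensorKet 4 v := by
  ext a b
  exact (tensorKet_conjTranspose_mul_mul_apply (n := 4) (m := 2) M v v a b).symm

end TensorKet

theorem ofReal_sqrt_mul_self {x : ℝ} (hx : 0 ≤ x) : (√x : ℂ) * (√x : ℂ) = x := by
  rw [← ofReal_mul, Real.mul_self_sqrt hx]

section Controlled

/-- The operator `A ⊗ |0⟩⟨0| + B ⊗ |1⟩⟨1|`, which applies `A` or `B` according to the value of a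
control qubit placed last. -/
def controlled {n : ℕ} (A B : Matrix (Fin n) (Fin n) ℂ) : Matrix (Fin (n * 2)) (Fin (n * 2)) ℂ :=
  kron A (proj ket0) + kron B (proj ket1)

theorem inv_sqrt_two_mul_self : (√2 : ℂ)⁻¹ * (√2 : ℂ)⁻¹ = 1 / 2 := by
  rw [← mul_inv, ofReal_sqrt_mul_self zero_le_two, ofReal_ofNat, one_div]

theorem dotProduct_proj_mulVec (u v w : Fin 2 → ℂ) :
    w ⬝ᵥ proj u *ᵥ v = (w ⬝ᵥ u) * (star u ⬝ᵥ v) := by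
  rw [proj, vecMulVec_mulVec, dotProduct_smul, op_smul_eq_mul]

theorem ketMinus_proj_ket0_ketPlus : star ketMinus ⬝ᵥ proj ket0 *ᵥ ketPlus = 1 / 2 := by
  rw [dotProduct_proj_mulVec]
  simpa [ketMinus, ketPlus, ket0, ket1, dotProduct] using inv_sqrt_two_mul_self

theorem ketMinus_proj_ket1_ketPlus : star ketMinus ⬝ᵥ proj ket1 *ᵥ ketPlus = -(1 / 2) := by
  rw [dotProduct_proj_mulVec]
  simpa [ketMinus, ketPlus, ket0, ket1, dotProduct] using inv_sqrt_two_mul_self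

theorem ketMinus_controlled_ketPlus {n : ℕ} (A B : Matrix (Fin n) (Fin n) ℂ) :
    (tensorKet n ketMinus)ᴴ * controlled A B * tensorKet n ketPlus = (1 / 2 : ℂ) • (A - B) := by
  rw [controlled, Matrix.mul_add, Matrix.add_mul, tensorKet_conjTranspose_mul_kron_mul,
    tensorKet_conjTranspose_mul_kron_mul, ketMinus_proj_ket0_ketPlus, ketMinus_proj_ket1_ketPlus,
    neg_smul, ← sub_eq_add_neg, smul_sub]

theorem contractCtrl_controlled_ketMinus (A B ρ : Matrix (Fin 4) (Fin 4) ℂ) :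
    contractCtrl (controlled A B * kron ρ (proj ketPlus) * (controlled A B)ᴴ) ketMinus =
      (1 / 4 : ℂ) • ((A - B) * ρ * (A - B)ᴴ) := by
  set K := (tensorKet 4 ketMinus)ᴴ * controlled A B * tensorKet 4 ketPlus with hK
  calc
    _ = K * ρ * Kᴴ := by
      rw [contractCtrl_eq_conj, proj, kron_vecMulVec, hK]
      simp only [conjTranspose_mul, conjTranspose_conjTranspose, Matrix.mul_assoc]
    _ = (1 / 4 : ℂ) • ((A - B) * ρ * (A - B)ᴴ) := by
      rw [hK, ketMinus_controlled_ketPlus]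
      simp only [conjTranspose_smul, Matrix.smul_mul, Matrix.mul_smul, smul_smul]
      norm_num

end Controlled

theorem W_eq_controlled (p q : ℝ) (i j : Fin 2) :
    W p q i j = controlled (kron I2 (Dk p i * Ek q j)) (kron I2 (Ek q j * Dk p i)) := by
  rw [W, kron_add, kron_assoc, kron_assoc]
  -- The cast from `Fin (2 * 2 * 2)` to `Fin (2 * (2 * 2))` is definitionally the identity.
  rfl

theorem contractCtrl_Sout_ketMinus (p q : ℝ) (ρ : Matrix (Fin 4) (Fin 4) ℂ) :
    contractCtrl (Sout p q ρ) ketMinus = (1 / 4 : ℂ) • ∑ i, ∑ j,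
      kron I2 ⁅Dk p i, Ek q j⁆ * ρ * (kron I2 ⁅Dk p i, Ek q j⁆)ᴴ := by
  have branch (i j : Fin 2) :
      contractCtrl (W p q i j * kron ρ (proj ketPlus) * (W p q i j)ᴴ) ketMinus =
        (1 / 4 : ℂ) • (kron I2 ⁅Dk p i, Ek q j⁆ * ρ * (kron I2 ⁅Dk p i, Ek q j⁆)ᴴ) := by
    rw [W_eq_controlled, Ring.lie_def, kron_sub]
    exact contractCtrl_controlled_ketMinus _ _ ρ
  simp only [Finset.smul_sum, ← branch, contractCtrl_eq_conj, Sout, Matrix.mul_sum, Matrix.sum_mul]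

theorem PX_lie_PZ : ⁅PX, PZ⁆ = (2 : ℂ) • (PX * PZ) := by
  have anticomm : PZ * PX = -(PX * PZ) := by simp [PX, PZ]
  rw [Ring.lie_def, anticomm, sub_neg_eq_add, two_smul]

theorem Dk_lie_Ek (p q : ℝ) (i j : Fin 2) :
    ⁅Dk p i, Ek q j⁆ = if i = 1 ∧ j = 1 then (2 * √p * √q : ℂ) • (PX * PZ) else 0 := by
  have smul_I2_lie (c : ℂ) (A : Matrix (Fin 2) (Fin 2) ℂ) : ⁅c • I2, A⁆ = 0 := by
    simp [I2, Ring.lie_def]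
  have lie_smul_I2 (c : ℂ) (A : Matrix (Fin 2) (Fin 2) ℂ) : ⁅A, c • I2⁆ = 0 := by
    simp [I2, Ring.lie_def]
  fin_cases i <;> fin_cases j
  · exact smul_I2_lie _ _
  · exact smul_I2_lie _ _
  · exact lie_smul_I2 _ _
  · calc
      ⁅(√p : ℂ) • PX, (√q : ℂ) • PZ⁆ = (√p * √q : ℂ) • ⁅PX, PZ⁆ := by
        simp only [Ring.lie_def, Matrix.smul_mul, Matrix.mul_smul, smul_smul, smul_sub,
          mul_comm (√q : ℂ)]
      _ = (2 * √p * √q : ℂ) • (PX * PZ) := by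
        rw [PX_lie_PZ, smul_smul]
        ring_nf

theorem PX_mem_unitaryGroup : PX ∈ unitaryGroup (Fin 2) ℂ := by
  rw [mem_unitaryGroup_iff]
  ext i j
  fin_cases i <;> fin_cases j <;> simp [PX, mul_apply]

theorem PZ_mem_unitaryGroup : PZ ∈ unitaryGroup (Fin 2) ℂ := by
  rw [mem_unitaryGroup_iff]
  ext i j
  fin_cases i <;> fin_cases j <;> simp [PZ, mul_apply]

theorem mul_conj_mul_of_mul_eq_one {M : Type*} [Monoid M] {u v : M} (h : v * u = 1) (x : M) :
    v * (u * x * v) * u = x := by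
  calc
    v * (u * x * v) * u = (v * u) * x * (v * u) := by simp only [mul_assoc]
    _ = x := by rw [h, one_mul, mul_one]

theorem minus_heralded_branch_noiseless (p q : ℝ) (hp : p ∈ Set.Icc (0 : ℝ) 1)
    (hq : q ∈ Set.Icc (0 : ℝ) 1) (ρ : Matrix (Fin 4) (Fin 4) ℂ) :
    contractCtrl (Sout p q ρ) ketMinus =
      (p * q : ℝ) • (kron I2 (PX * PZ) * ρ * (kron I2 (PX * PZ))ᴴ)
    ∧ (kron I2 (PX * PZ))ᴴ * (kron I2 (PX * PZ) * ρ * (kron I2 (PX * PZ))ᴴ) *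
        kron I2 (PX * PZ) = ρ := by
  have hU : kron I2 (PX * PZ) ∈ unitaryGroup (Fin 4) ℂ :=
    kron_mem_unitaryGroup (one_mem _) (mul_mem PX_mem_unitaryGroup PZ_mem_unitaryGroup)
  refine ⟨?_, mul_conj_mul_of_mul_eq_one (mem_unitaryGroup_iff'.mp hU) ρ⟩
  have hpq : (1 / 4 : ℂ) * ((2 * √p * √q) * (2 * √p * √q)) = (p * q : ℝ) := by
    push_cast
    linear_combination (√q : ℂ) * √q * ofReal_sqrt_mul_self hp.1 + p * ofReal_sqrt_mul_self hq.1
  set U := kron I2 (PX * PZ)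
  calc
    contractCtrl (Sout p q ρ) ketMinus = (1 / 4 : ℂ) •
        (((2 * √p * √q : ℂ) • U) * ρ * ((2 * √p * √q : ℂ) • U)ᴴ) := by
      simp [contractCtrl_Sout_ketMinus, Dk_lie_Ek, kron_zero, kron_smul, U]
    _ = (p * q : ℝ) • (U * ρ * Uᴴ) := by
      rw [← coe_smul, ← hpq]
      simp [smul_smul]

end
end

section
/- Let ρ_ψ be any 2×2 complex matrix with entries ρ_ψ^{ij} and ρ̃_e any 4×4 complex matrix with 2×2 blocks ρ̃_{e,11}, ρ̃_{e,12}, ρ̃_{e,21}, ρ̃_{e,22}. With ρ₁ = ρ_ψ ⊗ ρ̃_e, ρ₂ = (CNOT ⊗ I₂) ρ₁ (CNOT ⊗ I₂)†, ρ₃ = (H ⊗ I₄) ρ₂ (H ⊗ I₄)†, the projection onto Alice's measurement outcome |00⟩ satisfies Π₀₀ ρ₃ Π₀₀† = |00⟩⟨00| ⊗ (1/2)·( ρ_ψ^{11}·ρ̃_{e,11} + ρ_ψ^{12}·ρ̃_{e,12} + ρ_ψ^{21}·ρ̃_{e,21} + ρ_ψ^{22}·ρ̃_{e,22} ); in particular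 Bob's (unnormalized) post-measurement state for outcome 00 is proportional to ρ_ψ^{11}ρ̃_{e,11} + ρ_ψ^{12}ρ̃_{e,12} + ρ_ψ^{21}ρ̃_{e,21} + ρ_ψ^{22}ρ̃_{e,22}. -/
open Matrix Kronecker Complex

noncomputable section

/-- Controlled-NOT gate. -/
def CNOT : Matrix (Fin 4) (Fin 4) ℂ :=
  !![1, 0, 0, 0; 0, 1, 0, 0; 0, 0, 0, 1; 0, 0, 1, 0]

/-- Hadamard gate. -/
def Hgate : Matrix (Fin 2) (Fin 2) ℂ := ((Real.sqrt 2 : ℂ))⁻¹ • !![1, 1; 1, -1]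

/-- Two-qubit standard basis vectors |ij⟩. -/
def ket2 (i j : Fin 2) : Fin 4 → ℂ := fun k => if (k : ℕ) = 2 * (i : ℕ) + (j : ℕ) then 1 else 0

/-- Projector Π_{ij} = |ij⟩⟨ij| ⊗ I₂ onto Alice's measurement outcome ij. -/
def Pi2 (i j : Fin 2) : Matrix (Fin 8) (Fin 8) ℂ :=
  kron (vecMulVec (ket2 i j) (star (ket2 i j))) I2

/-- The 2×2 block of a 4×4 matrix in (block-)position (a,b). -/
def blk (ρ : Matrix (Fin 4) (Fin 4) ℂ) (a b : Fin 2) : Matrix (Fin 2) (Fin 2) ℂ :=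
  Matrix.of fun i j =>
    ρ ⟨2 * (a : ℕ) + (i : ℕ), by have := a.isLt; have := i.isLt; omega⟩
      ⟨2 * (b : ℕ) + (j : ℕ), by have := b.isLt; have := j.isLt; omega⟩

/-- Global state after Alice's CNOT and Hadamard gates in the teleportation circuit. -/
def rho3 (ρψ : Matrix (Fin 2) (Fin 2) ℂ) (ρe : Matrix (Fin 4) (Fin 4) ℂ) :
    Matrix (Fin 8) (Fin 8) ℂ :=
  kron Hgate (1 : Matrix (Fin 4) (Fin 4) ℂ) *
    (kron CNOT I2 * kron ρψ ρe * (kron CNOT I2)ᴴ) *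
    (kron Hgate (1 : Matrix (Fin 4) (Fin 4) ℂ))ᴴ

/-!
Alice's circuit followed by `⟨ij|` is a Bell measurement: pulling `|ij⟩` back through `H` and `CNOT`
gives the vector with amplitude matrix `ZⁱXʲ / √2`. For a vector `v` with amplitude matrix `U`, one
has `⟨v| A ⊗ |c⟩⟨d| |v⟩ = (Uᴴ A U)_{cd}`, so expanding `ρ̃_e = ∑ |c⟩⟨d| ⊗ ρ̃_{e,cd}` shows that Bob
is left with `½ ∑ ((ZⁱXʲ)ᴴ ρ_ψ ZⁱXʲ)_{cd} ρ̃_{e,cd}`, where `ZⁱXʲ = 1` for the outcome `00`.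
-/

/-- The vector `∑ a b, U a b • |a⟩ ⊗ |b⟩` with amplitude matrix `U`, in the row-major indexing used
by `kron`. Mathlib's `vec` is column-major, whence the transpose. -/
def amplitudeVec {m n : ℕ} (U : Matrix (Fin m) (Fin n) ℂ) : Fin (m * n) → ℂ :=
  vec Uᵀ ∘ finProdFinEquiv.symm

section Kron

variable {ι : Type*} {m n p : ℕ}

lemma kron_apply (A : Matrix (Fin m) (Fin m) ℂ) (B : Matrix (Fin n) (Fin n) ℂ)
    (i j : Fin (m * n)) :
    kron A B i j = A i.divNat j.divNat * B i.modNat j.modNat :=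
  rfl

lemma kron_mul_kron (A C : Matrix (Fin m) (Fin m) ℂ) (B D : Matrix (Fin n) (Fin n) ℂ) :
    kron A B * kron C D = kron (A * C) (B * D) := by
  simp only [kron, reindex_apply, submatrix_mul_equiv, mul_kronecker_mul]

lemma conjTranspose_kron (A : Matrix (Fin m) (Fin m) ℂ) (B : Matrix (Fin n) (Fin n) ℂ) :
    (kron A B)ᴴ = kron Aᴴ Bᴴ := by
  simp only [kron, conjTranspose_reindex, conjTranspose_kronecker]

lemma kron_one_one : kron (1 : Matrix (Fin m) (Fin m) ℂ) (1 : Matrix (Fin n) (Fin n) ℂ) = 1 := by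
  simp only [kron, one_kronecker_one, reindex_apply, submatrix_one_equiv]

lemma kron_sum (A : Matrix (Fin m) (Fin m) ℂ) (s : Finset ι) (B : ι → Matrix (Fin n) (Fin n) ℂ) :
    kron A (∑ k ∈ s, B k) = ∑ k ∈ s, kron A (B k) := by
  ext i j
  simp only [kron_apply, Matrix.sum_apply, Finset.mul_sum]

lemma smul_kron (r : ℂ) (A : Matrix (Fin m) (Fin m) ℂ) (B : Matrix (Fin n) (Fin n) ℂ) :
    kron (r • A) B = kron A (r • B) := by
  simp only [kron, smul_kronecker, kronecker_smul]

lemma reindex_kron_kron (A : Matrix (Fin m) (Fin m) ℂ) (B : Matrix (Fin n) (Fin n) ℂ)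
    (C : Matrix (Fin p) (Fin p) ℂ) :
    reindex (finCongr (mul_assoc m n p)) (finCongr (mul_assoc m n p)) (kron (kron A B) C) =
      kron A (kron B C) := by
  have hindex (a : Fin m) (b : Fin n) (c : Fin p) :
      (finCongr (mul_assoc m n p)).symm (finProdFinEquiv (a, finProdFinEquiv (b, c))) =
        finProdFinEquiv (finProdFinEquiv (a, b), c) := by
    ext
    simp only [finCongr_symm, finCongr_apply_coe, finProdFinEquiv_apply_val]
    ring
  ext i j
  obtain ⟨⟨a, bc⟩, rfl⟩ := finProdFinEquiv.surjective i
  obtain ⟨⟨b, c⟩, rfl⟩ := finProdFinEquiv.surjective bc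
  obtain ⟨⟨a', bc'⟩, rfl⟩ := finProdFinEquiv.surjective j
  obtain ⟨⟨b', c'⟩, rfl⟩ := finProdFinEquiv.surjective bc'
  simp only [kron, reindex_apply, submatrix_apply, kroneckerMap_apply, hindex,
    Equiv.symm_apply_apply, mul_assoc]

lemma sum_kron_single (ρ : Matrix (Fin (m * n)) (Fin (m * n)) ℂ) :
    ∑ c, ∑ d, kron (single c d 1)
      (of fun i j => ρ (finProdFinEquiv (c, i)) (finProdFinEquiv (d, j))) = ρ := by
  ext i j
  obtain ⟨⟨a, b⟩, rfl⟩ := finProdFinEquiv.surjective i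
  obtain ⟨⟨a', b'⟩, rfl⟩ := finProdFinEquiv.surjective j
  simp [Matrix.sum_apply, kron, single_apply, ite_and]

lemma amplitudeVec_add (U V : Matrix (Fin m) (Fin n) ℂ) :
    amplitudeVec (U + V) = amplitudeVec U + amplitudeVec V :=
  rfl

lemma star_amplitudeVec_dotProduct_amplitudeVec (U V : Matrix (Fin m) (Fin n) ℂ) :
    star (amplitudeVec U) ⬝ᵥ amplitudeVec V = (Uᴴ * V).trace := by
  calc star (amplitudeVec U) ⬝ᵥ amplitudeVec V
      = star (vec Uᵀ) ⬝ᵥ vec Vᵀ :=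
        comp_equiv_dotProduct_comp_equiv (star (vec Uᵀ)) (vec Vᵀ) finProdFinEquiv.symm
    _ = (Uᵀᴴ * Vᵀ).trace := star_vec_dotProduct_vec _ _
    _ = (V * Uᴴ).trace := by
        rw [← trace_transpose, transpose_mul, transpose_transpose]
        rfl
    _ = (Uᴴ * V).trace := trace_mul_comm _ _

lemma kron_mulVec_amplitudeVec (A : Matrix (Fin m) (Fin m) ℂ) (B : Matrix (Fin n) (Fin n) ℂ)
    (U : Matrix (Fin m) (Fin n) ℂ) :
    kron A B *ᵥ amplitudeVec U = amplitudeVec (A * U * Bᵀ) := by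
  simp only [amplitudeVec, kron, reindex_apply, submatrix_mulVec_equiv, Equiv.symm_symm,
    Function.comp_assoc, Equiv.symm_comp_self, Function.comp_id, kronecker_mulVec_vec,
    transpose_mul, transpose_transpose, Matrix.mul_assoc]

end Kron

lemma vecMulVec_star_mul_mul_conjTranspose {l m R : Type*} [Fintype m] [CommSemiring R] [StarRing R]
    (w : l → R) (v : m → R) (M : Matrix m m R) :
    vecMulVec w (star v) * M * (vecMulVec w (star v))ᴴ =
      (star v ⬝ᵥ (M *ᵥ v)) • vecMulVec w (star w) := by
  rw [conjTranspose_vecMulVec, star_star, Matrix.mul_assoc, mul_vecMulVec,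
    vecMulVec_mul_vecMulVec, vecMulVec_smul]

lemma kron_vecMulVec_mul_sum_mul_conjTranspose {m n p : ℕ} (w : Fin (m * n) → ℂ)
    (U : Matrix (Fin m) (Fin n) ℂ)
    (A : Matrix (Fin m) (Fin m) ℂ) (B : Fin n → Fin n → Matrix (Fin p) (Fin p) ℂ) :
    kron (vecMulVec w (star (amplitudeVec U))) 1 *
        (∑ c, ∑ d, kron (kron A (single c d 1)) (B c d)) *
        (kron (vecMulVec w (star (amplitudeVec U))) 1)ᴴ =
      kron (vecMulVec w (star w)) (∑ c, ∑ d, (Uᴴ * A * U) c d • B c d) := by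
  simp only [Finset.mul_sum, Finset.sum_mul, conjTranspose_kron, conjTranspose_one, kron_mul_kron,
    Matrix.one_mul, Matrix.mul_one, vecMulVec_star_mul_mul_conjTranspose, smul_kron, kron_sum,
    kron_mulVec_amplitudeVec, star_amplitudeVec_dotProduct_amplitudeVec, ← Matrix.mul_assoc,
    transpose_single, trace_mul_single, MulOpposite.op_one, one_smul]

lemma blk_eq (ρ : Matrix (Fin 4) (Fin 4) ℂ) (c d : Fin 2) :
    blk ρ c d = of fun i j => ρ (finProdFinEquiv (c, i)) (finProdFinEquiv (d, j)) := by
  ext i j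
  exact congrArg₂ ρ (Fin.ext (add_comm _ _)) (Fin.ext (add_comm _ _))

lemma kron_eq_sum_kron_kron_single_blk (A : Matrix (Fin 2) (Fin 2) ℂ)
    (ρ : Matrix (Fin 4) (Fin 4) ℂ) :
    kron A ρ = ∑ c, ∑ d, kron (kron A (single c d 1)) (blk ρ c d) := by
  conv_lhs => rw [← sum_kron_single (m := 2) (n := 2) ρ]
  simp only [kron_sum, ← blk_eq]
  -- For numeral dimensions the reindexing along `mul_assoc` is definitionally the identity.
  exact Finset.sum_congr rfl fun c _ => Finset.sum_congr rfl fun d _ =>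
    (reindex_kron_kron A (single c d 1) (blk ρ c d)).symm

/-- The Pauli operator `ZⁱXʲ`; `pauliZX i j / √2` is the amplitude matrix of the Bell state that
Alice's circuit sends to `|ij⟩`. -/
def pauliZX (i j : Fin 2) : Matrix (Fin 2) (Fin 2) ℂ := PZ ^ (i : ℕ) * PX ^ (j : ℕ)

lemma ket2_eq_amplitudeVec (i j : Fin 2) : ket2 i j = amplitudeVec (single i j 1) := by
  ext k
  obtain ⟨⟨a, b⟩, rfl⟩ := finProdFinEquiv.surjective (α := Fin 2 × Fin 2) k
  have hindex : (b : ℕ) + 2 * a = 2 * i + j ↔ i = a ∧ j = b := by omega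
  simp only [amplitudeVec, Function.comp_apply, Equiv.symm_apply_apply, vec, transpose_apply,
    single_apply]
  exact if_congr hindex rfl rfl

lemma CNOT_eq : CNOT = kron (single (0 : Fin 2) 0 1) I2 + kron (single (1 : Fin 2) 1 1) PX := by
  ext k l
  fin_cases k <;> fin_cases l <;>
    simp [CNOT, kron_apply, one_apply, PX, I2, Fin.divNat, Fin.modNat]

lemma conjTranspose_kron_Hgate_mul_CNOT_mulVec_ket2 (i j : Fin 2) :
    (kron Hgate (1 : Matrix (Fin 2) (Fin 2) ℂ) * CNOT)ᴴ *ᵥ ket2 i j =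
      amplitudeVec ((√2 : ℂ)⁻¹ • pauliZX i j) := by
  rw [conjTranspose_mul, CNOT_eq, conjTranspose_add, conjTranspose_kron, conjTranspose_kron,
    conjTranspose_kron, ← mulVec_mulVec, ket2_eq_amplitudeVec, kron_mulVec_amplitudeVec,
    add_mulVec, kron_mulVec_amplitudeVec, kron_mulVec_amplitudeVec, ← amplitudeVec_add]
  congr 1
  ext a b
  fin_cases i <;> fin_cases j <;> fin_cases a <;> fin_cases b <;>
    simp [Hgate, pauliZX, I2, PZ, PX, mul_apply, Fin.sum_univ_two]

lemma Pi2_mul_kron_Hgate_mul_kron_CNOT (i j : Fin 2) :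
    Pi2 i j * (kron Hgate (1 : Matrix (Fin 4) (Fin 4) ℂ) * kron CNOT I2) =
      kron (vecMulVec (ket2 i j) (star (amplitudeVec ((√2 : ℂ)⁻¹ • pauliZX i j))))
        (1 : Matrix (Fin 2) (Fin 2) ℂ) := by
  have hassoc : kron Hgate (1 : Matrix (Fin 4) (Fin 4) ℂ) =
      kron (kron Hgate (1 : Matrix (Fin 2) (Fin 2) ℂ)) I2 := by
    rw [I2, ← kron_one_one (m := 2) (n := 2)]
    exact (reindex_kron_kron Hgate 1 1).symm
  rw [hassoc]
  unfold Pi2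
  rw [← conjTranspose_kron_Hgate_mul_CNOT_mulVec_ket2, star_mulVec, conjTranspose_conjTranspose,
    ← vecMulVec_mul, I2, kron_mul_kron, kron_mul_kron, Matrix.one_mul, Matrix.one_mul]

theorem teleportation_outcome_00_general (i j : Fin 2) (ρψ : Matrix (Fin 2) (Fin 2) ℂ)
    (ρe : Matrix (Fin 4) (Fin 4) ℂ) :
    Pi2 i j * rho3 ρψ ρe * (Pi2 i j)ᴴ =
      kron (vecMulVec (ket2 i j) (star (ket2 i j)))
        ((2 : ℂ)⁻¹ • ∑ c, ∑ d, ((pauliZX i j)ᴴ * ρψ * pauliZX i j) c d • blk ρe c d) := by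
  have hnorm : (√2 : ℂ)⁻¹ * star (√2 : ℂ)⁻¹ = (2 : ℂ)⁻¹ := by
    simp [← mul_inv, ← ofReal_mul]
  let K := Pi2 i j * (kron Hgate (1 : Matrix (Fin 4) (Fin 4) ℂ) * kron CNOT I2)
  calc Pi2 i j * rho3 ρψ ρe * (Pi2 i j)ᴴ
      = K * kron ρψ ρe * Kᴴ := by
        simp only [K, rho3, conjTranspose_mul, Matrix.mul_assoc]
    _ = kron (vecMulVec (ket2 i j) (star (ket2 i j)))
          (∑ c, ∑ d, (((√2 : ℂ)⁻¹ • pauliZX i j)ᴴ * ρψ * ((√2 : ℂ)⁻¹ • pauliZX i j)) c d •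
            blk ρe c d) := by
        simp only [K]
        rw [Pi2_mul_kron_Hgate_mul_kron_CNOT, kron_eq_sum_kron_kron_single_blk]
        exact kron_vecMulVec_mul_sum_mul_conjTranspose (m := 2) (n := 2) _ _ _ _
    _ = _ := by
        simp only [conjTranspose_smul, Matrix.smul_mul, Matrix.mul_smul, smul_smul, hnorm,
          Matrix.smul_apply, smul_assoc, Finset.smul_sum]

theorem teleportation_outcome_00 (ρψ : Matrix (Fin 2) (Fin 2) ℂ)
    (ρe : Matrix (Fin 4) (Fin 4) ℂ) :
    Pi2 0 0 * rho3 ρψ ρe * (Pi2 0 0)ᴴ =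
      kron (vecMulVec (ket2 0 0) (star (ket2 0 0)))
        (((2 : ℂ))⁻¹ • (ρψ 0 0 • blk ρe 0 0 + ρψ 0 1 • blk ρe 0 1
          + ρψ 1 0 • blk ρe 1 0 + ρψ 1 1 • blk ρe 1 1)) := by
  simpa [pauliZX, Fin.sum_univ_two, add_assoc] using
    teleportation_outcome_00_general 0 0 ρψ ρe

end
end
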